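/- For every real constant A with 0 < A ≤ 1, there exists an infinitely differentiable function G : [-1, 1] → ℝ such that: (1) G'(s) > 0 for all s ∈ [-1, 1]; (2) G''(s) ≥ 0 for all s ∈ [-1, 1]; (3) there exists δ > 0 such that G(s) = A·(exp(s) − exp(−1)) − 1 for all s ∈ [-1, -1 + δ]; and (4) there exists ε > 0 such that G(s) = 2s for all s ∈ [-1, 1] with |s| ≤ ε. -/

import Mathlib

/-!
The exponential profile `A (e ^ s - e⁻¹) - 1` lies above the line `2 s` at `-1` and below it at `0`,
so a smoothed maximum of the two functions agrees with the first near `-1` and with the second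
near `0`. Such a maximum is increasing and convex because its derivative is a convex combination of
the two slopes, in which the weight shifts towards the first function at a rate proportional to
the difference of the slopes.
-/

open Filter Real Topology
open scoped ContDiff

section SmoothRamp

theorem smoothTransition_one_sub (t : ℝ) : smoothTransition (1 - t) = 1 - smoothTransition t := by
  have hdenom := (smoothTransition.pos_denom t).ne'
  rw [smoothTransition, smoothTransition, sub_sub_cancel, add_comm (expNegInvGlue (1 - t)),
    eq_sub_iff_add_eq, ← add_div, add_comm (expNegInvGlue (1 - t)), div_self hdenom]

theorem intervalIntegrable_smoothTransition (a b : ℝ) :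
    IntervalIntegrable smoothTransition MeasureTheory.volume a b :=
  smoothTransition.continuous.intervalIntegrable a b

theorem integral_smoothTransition_zero_one : ∫ u in (0 : ℝ)..1, smoothTransition u = 1 / 2 := by
  have hreflect : ∫ u in (0 : ℝ)..1, smoothTransition (1 - u) =
      ∫ u in (0 : ℝ)..1, smoothTransition u := by
    simp only [intervalIntegral.integral_comp_sub_left, sub_self, sub_zero]
  have hcompl : ∫ u in (0 : ℝ)..1, smoothTransition (1 - u) =
      1 - ∫ u in (0 : ℝ)..1, smoothTransition u := by
    simp only [smoothTransition_one_sub]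
    rw [intervalIntegral.integral_sub (by simp) (intervalIntegrable_smoothTransition 0 1)]
    simp
  linarith

/-- The primitive of `Real.smoothTransition` vanishing at `0`: a smooth convex substitute for the
positive part, with the corner rounded over `[0, 1]`. -/
noncomputable def smoothRamp (t : ℝ) : ℝ :=
  ∫ u in (0 : ℝ)..t, smoothTransition u

theorem hasDerivAt_smoothRamp (t : ℝ) : HasDerivAt smoothRamp (smoothTransition t) t :=
  (smoothTransition.continuous.integral_hasStrictDerivAt 0 t).hasDerivAt

theorem contDiff_smoothRamp {n : ℕ∞} : ContDiff ℝ n smoothRamp := by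
  have hderiv : deriv smoothRamp = smoothTransition :=
    funext fun t => (hasDerivAt_smoothRamp t).deriv
  have hsmooth : ContDiff ℝ ∞ smoothRamp := contDiff_infty_iff_deriv.2
    ⟨fun t => (hasDerivAt_smoothRamp t).differentiableAt, hderiv ▸ smoothTransition.contDiff⟩
  exact hsmooth.of_le (mod_cast le_top)

theorem smoothRamp_of_nonpos {t : ℝ} (ht : t ≤ 0) : smoothRamp t = 0 := by
  have hzero : Set.EqOn smoothTransition (fun _ => 0) (Set.uIcc 0 t) := fun u hu =>
    smoothTransition.zero_of_nonpos (Set.uIcc_of_ge ht ▸ hu).2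
  rw [smoothRamp, intervalIntegral.integral_congr hzero, intervalIntegral.integral_zero]

theorem smoothRamp_of_one_le {t : ℝ} (ht : 1 ≤ t) : smoothRamp t = t - 1 / 2 := by
  have hone : Set.EqOn smoothTransition (fun _ => 1) (Set.uIcc 1 t) := fun u hu =>
    smoothTransition.one_of_one_le (Set.uIcc_of_le ht ▸ hu).1
  calc smoothRamp t
      = (∫ u in (0 : ℝ)..1, smoothTransition u) + ∫ u in (1 : ℝ)..t, smoothTransition u :=
        (intervalIntegral.integral_add_adjacent_intervals
          (intervalIntegrable_smoothTransition 0 1) (intervalIntegrable_smoothTransition 1 t)).symm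
    _ = 1 / 2 + (t - 1) := by
        rw [integral_smoothTransition_zero_one, intervalIntegral.integral_congr hone,
          integral_one]
    _ = t - 1 / 2 := by ring

end SmoothRamp

section SmoothMax

/-- A smooth approximation of `max x y`, equal to it as soon as `x` and `y` differ by at least
`r / 2`, for `0 < r`. -/
noncomputable def smoothMax (r x y : ℝ) : ℝ :=
  y + r * smoothRamp ((x - y) / r + 1 / 2)

/-- The weight in `[0, 1]` which `smoothMax r x y` gives to `x`, that is, its partial derivative in
`x`; the partial derivative in `y` is the complementary weight. -/
noncomputable def smoothMaxWeight (r x y : ℝ) : ℝ :=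
  smoothTransition ((x - y) / r + 1 / 2)

variable {r : ℝ}

theorem smoothMax_eq_left {x y : ℝ} (hr : 0 < r) (h : y + r / 2 ≤ x) : smoothMax r x y = x := by
  have hhalf : 1 / 2 ≤ (x - y) / r := by rw [le_div_iff₀ hr]; linarith
  rw [smoothMax, smoothRamp_of_one_le (by linarith)]
  field

theorem smoothMax_eq_right {x y : ℝ} (hr : 0 < r) (h : x + r / 2 ≤ y) : smoothMax r x y = y := by
  have hhalf : (x - y) / r ≤ -(1 / 2) := by rw [div_le_iff₀ hr]; linarith
  rw [smoothMax, smoothRamp_of_nonpos (by linarith), mul_zero, add_zero]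

variable {f g : ℝ → ℝ} {s : ℝ}

theorem contDiff_smoothMax {n : ℕ∞} (r : ℝ) (hf : ContDiff ℝ n f) (hg : ContDiff ℝ n g) :
    ContDiff ℝ n fun s => smoothMax r (f s) (g s) :=
  hg.add <| contDiff_const.mul <|
    contDiff_smoothRamp.comp <| ((hf.sub hg).div_const r).add contDiff_const

theorem deriv_smoothMax (hr : r ≠ 0) (hf : DifferentiableAt ℝ f s) (hg : DifferentiableAt ℝ g s) :
    deriv (fun s => smoothMax r (f s) (g s)) s =
      smoothMaxWeight r (f s) (g s) * deriv f s +
        (1 - smoothMaxWeight r (f s) (g s)) * deriv g s := by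
  have harg := ((hf.hasDerivAt.sub hg.hasDerivAt).div_const r).add_const (1 / 2)
  have hmax := hg.hasDerivAt.add (((hasDerivAt_smoothRamp _).comp s harg).const_mul r)
  refine hmax.deriv.trans ?_
  simp only [smoothMaxWeight, Pi.sub_apply]
  field

theorem hasDerivAt_smoothMaxWeight (r : ℝ) (hf : DifferentiableAt ℝ f s)
    (hg : DifferentiableAt ℝ g s) :
    HasDerivAt (fun s => smoothMaxWeight r (f s) (g s))
      (deriv smoothTransition ((f s - g s) / r + 1 / 2) * ((deriv f s - deriv g s) / r)) s := by
  have harg := ((hf.hasDerivAt.sub hg.hasDerivAt).div_const r).add_const (1 / 2)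
  have hstep : Differentiable ℝ smoothTransition :=
    (smoothTransition.contDiff (n := 1)).differentiable one_ne_zero
  exact (hstep _).hasDerivAt.comp s harg

theorem deriv_deriv_smoothMax (hr : r ≠ 0) (hf : Differentiable ℝ f) (hg : Differentiable ℝ g)
    (hf' : DifferentiableAt ℝ (deriv f) s) (hg' : DifferentiableAt ℝ (deriv g) s) :
    deriv (deriv fun s => smoothMax r (f s) (g s)) s =
      smoothMaxWeight r (f s) (g s) * deriv (deriv f) s +
        (1 - smoothMaxWeight r (f s) (g s)) * deriv (deriv g) s +
        deriv smoothTransition ((f s - g s) / r + 1 / 2) * ((deriv f s - deriv g s) ^ 2 / r) := by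
  have hweight := hasDerivAt_smoothMaxWeight r (hf s) (hg s)
  have hslope := (hweight.mul hf'.hasDerivAt).add ((hweight.const_sub 1).mul hg'.hasDerivAt)
  rw [show deriv (fun s => smoothMax r (f s) (g s)) = _ from
    funext fun s => deriv_smoothMax hr (hf s) (hg s)]
  refine hslope.deriv.trans ?_
  ring

theorem deriv_smoothMax_pos (hr : r ≠ 0) (hf : 0 < deriv f s) (hg : 0 < deriv g s) :
    0 < deriv (fun s => smoothMax r (f s) (g s)) s := by
  rw [deriv_smoothMax hr (differentiableAt_of_deriv_ne_zero hf.ne')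
    (differentiableAt_of_deriv_ne_zero hg.ne')]
  exact convex_Ioi (0 : ℝ) hf hg (smoothTransition.nonneg _)
    (sub_nonneg.2 (smoothTransition.le_one _)) (add_sub_cancel _ _)

theorem deriv_deriv_smoothMax_nonneg (hr : 0 < r) (hf : ContDiff ℝ 2 f) (hg : ContDiff ℝ 2 g)
    (hf'' : 0 ≤ deriv (deriv f) s) (hg'' : 0 ≤ deriv (deriv g) s) :
    0 ≤ deriv (deriv fun s => smoothMax r (f s) (g s)) s := by
  rw [deriv_deriv_smoothMax hr.ne' (hf.differentiable two_ne_zero) (hg.differentiable two_ne_zero)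
    (hf.differentiable_deriv_two s) (hg.differentiable_deriv_two s)]
  refine add_nonneg ?_ ?_
  · exact convex_Ici (0 : ℝ) hf'' hg'' (smoothTransition.nonneg _)
      (sub_nonneg.2 (smoothTransition.le_one _)) (add_sub_cancel _ _)
  · exact mul_nonneg smoothTransition.monotone.deriv_nonneg (by positivity)

end SmoothMax

theorem exists_contDiff_convex_interpolation {n : ℕ∞} {f g : ℝ → ℝ} {a b : ℝ} (hn : 2 ≤ n)
    (hf : ContDiff ℝ n f) (hg : ContDiff ℝ n g)
    (hf' : ∀ s, 0 < deriv f s) (hg' : ∀ s, 0 < deriv g s)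
    (hf'' : ∀ s, 0 ≤ deriv (deriv f) s) (hg'' : ∀ s, 0 ≤ deriv (deriv g) s)
    (ha : g a < f a) (hb : f b < g b) :
    ∃ G : ℝ → ℝ, ContDiff ℝ n G ∧ (∀ s, 0 < deriv G s) ∧ (∀ s, 0 ≤ deriv (deriv G) s) ∧
      G =ᶠ[𝓝 a] f ∧ G =ᶠ[𝓝 b] g := by
  obtain ⟨r, hr, hrgap⟩ : ∃ r > 0, r < min (f a - g a) (g b - f b) :=
    exists_between (lt_min (sub_pos.2 ha) (sub_pos.2 hb))
  obtain ⟨hra, hrb⟩ := lt_min_iff.1 hrgap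
  have hnear_a : ∀ᶠ s in 𝓝 a, g s + r / 2 < f s :=
    (hg.continuous.add_const _).continuousAt.eventually_lt hf.continuous.continuousAt (by linarith)
  have hnear_b : ∀ᶠ s in 𝓝 b, f s + r / 2 < g s :=
    (hf.continuous.add_const _).continuousAt.eventually_lt hg.continuous.continuousAt (by linarith)
  have htwo : (2 : WithTop ℕ∞) ≤ n := WithTop.coe_le_coe.2 hn
  exact ⟨fun s => smoothMax r (f s) (g s), contDiff_smoothMax r hf hg,
    fun s => deriv_smoothMax_pos hr.ne' (hf' s) (hg' s),
    fun s => deriv_deriv_smoothMax_nonneg hr (hf.of_le htwo) (hg.of_le htwo) (hf'' s) (hg'' s),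
    hnear_a.mono fun _ h => smoothMax_eq_left hr h.le,
    hnear_b.mono fun _ h => smoothMax_eq_right hr h.le⟩

theorem calculus_interpolation_lemma_general (A : ℝ) (hA0 : 0 < A)
    (hA : A * (1 - exp (-1)) < 1) :
    ∃ G : ℝ → ℝ, ContDiff ℝ ∞ G ∧ (∀ s, 0 < deriv G s) ∧ (∀ s, 0 ≤ deriv (deriv G) s) ∧
      (∀ᶠ s in 𝓝 (-1), G s = A * (exp s - exp (-1)) - 1) ∧ (∀ᶠ s in 𝓝 0, G s = 2 * s) := by
  have hexp : (deriv fun s => A * (exp s - exp (-1)) - 1) = fun s => A * exp s := by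
    ext s
    simp
  have hline : (deriv fun s : ℝ => 2 * s) = fun _ => 2 := by
    ext s
    simp
  apply exists_contDiff_convex_interpolation le_top
  · fun_prop
  · fun_prop
  · intro s
    rw [hexp]
    positivity
  · simp [hline]
  · intro s
    simp only [hexp, deriv_const_mul_field', Real.deriv_exp]
    positivity
  · simp [hline]
  · norm_num
  · simpa using hA

/-- **Calculus interpolation lemma** (Lemma 4 of the paper).
For every real constant `A` with `0 < A ≤ 1`, there is a smooth function
`G` on `[-1, 1]` (modelled as a smooth function on `ℝ`, with all conditions
imposed on `[-1, 1]`) which is strictly increasing and convex on `[-1, 1]`,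
agrees with `A * (exp s - exp (-1)) - 1` near `s = -1`, and agrees with
`2 * s` near `s = 0`. -/
theorem calculus_interpolation_lemma (A : ℝ) (hA0 : 0 < A) (hA1 : A ≤ 1) :
    ∃ G : ℝ → ℝ, ContDiff ℝ (⊤ : ℕ∞) G ∧
      (∀ s ∈ Set.Icc (-1 : ℝ) 1, 0 < deriv G s) ∧
      (∀ s ∈ Set.Icc (-1 : ℝ) 1, 0 ≤ deriv (deriv G) s) ∧
      (∃ δ > (0 : ℝ), ∀ s ∈ Set.Icc (-1 : ℝ) (-1 + δ),
        G s = A * (Real.exp s - Real.exp (-1)) - 1) ∧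
      (∃ ε > (0 : ℝ), ∀ s ∈ Set.Icc (-1 : ℝ) 1, |s| ≤ ε → G s = 2 * s) := by
  obtain ⟨G, hG, hG', hG'', hexp, hline⟩ := calculus_interpolation_lemma_general A hA0
    (by linarith [mul_pos hA0 (Real.exp_pos (-1))])
  obtain ⟨δ, hδ, hexp⟩ := Metric.nhds_basis_closedBall.eventually_iff.1 hexp
  obtain ⟨ε, hε, hline⟩ := Metric.nhds_basis_closedBall.eventually_iff.1 hline
  refine ⟨G, hG, fun s _ => hG' s, fun s _ => hG'' s, ⟨δ, hδ, fun s hs => hexp ?_⟩,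
    ⟨ε, hε, fun s _ hs => hline ?_⟩⟩
  · rw [Real.closedBall_eq_Icc]
    exact ⟨by linarith [hs.1], hs.2⟩
  · rwa [mem_closedBall_zero_iff]
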